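/- Let n ≥ 1, let x ∈ (0,1), let a > 1, and let ρ₁, ρ₂ be density matrices (n×n complex positive semidefinite matrices of trace 1) such that ρ_Av := x·ρ₁ + (1−x)·ρ₂ is positive definite. Then x·H̃_a(ρ₁, ρ_Av) + (1−x)·H̃_a(ρ₂, ρ_Av) ≤ h(x), where h(x) = −x·log x − (1−x)·log(1−x) is the binary entropy. -/

import Mathlib

open Matrix ComplexOrder

/-- Apply a real function to a Hermitian matrix via the spectral decomposition
`A = U D U*`: the result is `U (f(D)) U*` where `f` acts on the diagonal. -/
noncomputable def mfun {m : Type*} [Fintype m] [DecidableEq m]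
    (f : ℝ → ℝ) (A : Matrix m m ℂ) : Matrix m m ℂ :=
  if hA : A.IsHermitian then hA.cfc f else 0

/-- Matrix logarithm via spectral decomposition, with the convention `log 0 = 0`
(note `Real.log 0 = 0`). -/
noncomputable def matLog {m : Type*} [Fintype m] [DecidableEq m]
    (A : Matrix m m ℂ) : Matrix m m ℂ :=
  mfun Real.log A

/-- The positive semidefinite square root of a positive semidefinite matrix,
via spectral decomposition. -/
noncomputable def matSqrt {m : Type*} [Fintype m] [DecidableEq m]
    (A : Matrix m m ℂ) : Matrix m m ℂ :=
  mfun Real.sqrt A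

/-- Real power of a (positive semidefinite / positive definite) matrix via spectral
decomposition. -/
noncomputable def matRpow {m : Type*} [Fintype m] [DecidableEq m]
    (t : ℝ) (A : Matrix m m ℂ) : Matrix m m ℂ :=
  mfun (fun u => u ^ t) A

/-- The von Neumann entropy `S(ρ) = -Tr(ρ log ρ)`. -/
noncomputable def vnEntropy {m : Type*} [Fintype m] [DecidableEq m]
    (ρ : Matrix m m ℂ) : ℝ :=
  -(Matrix.trace (ρ * matLog ρ)).re

/-- The quantum relative entropy `H(ρ, γ) = Tr(ρ (log ρ - log γ))`. -/
noncomputable def relEntropy {m : Type*} [Fintype m] [DecidableEq m]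
    (ρ γ : Matrix m m ℂ) : ℝ :=
  (Matrix.trace (ρ * (matLog ρ - matLog γ))).re

/-- The trace norm of a Hermitian matrix: the sum of the absolute values of its
eigenvalues. -/
noncomputable def traceNorm {m : Type*} [Fintype m] [DecidableEq m]
    (A : Matrix m m ℂ) : ℝ :=
  if hA : A.IsHermitian then ∑ i, |hA.eigenvalues i| else 0

/-- A density matrix: positive semidefinite with trace 1. -/
def IsDensity {m : Type*} [Fintype m] [DecidableEq m] (ρ : Matrix m m ℂ) : Prop :=
  ρ.PosSemidef ∧ Matrix.trace ρ = 1

/-- The binary entropy `h(x) = -x log x - (1-x) log (1-x)`. -/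
noncomputable def binEntropy (x : ℝ) : ℝ :=
  -(x * Real.log x) - (1 - x) * Real.log (1 - x)

/-- The Renyi relative entropy `H_a(ρ,γ) = (a-1)⁻¹ log Tr(ρ^a γ^(1-a))`. -/
noncomputable def renyiRel {m : Type*} [Fintype m] [DecidableEq m]
    (a : ℝ) (ρ γ : Matrix m m ℂ) : ℝ :=
  (a - 1)⁻¹ * Real.log (Matrix.trace (matRpow a ρ * matRpow (1 - a) γ)).re

/-- The sandwiched Renyi relative entropy
`H̃_a(ρ,γ) = (a-1)⁻¹ log Tr((γ^((1-a)/(2a)) ρ γ^((1-a)/(2a)))^a)`. -/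
noncomputable def sandRenyiRel {m : Type*} [Fintype m] [DecidableEq m]
    (a : ℝ) (ρ γ : Matrix m m ℂ) : ℝ :=
  (a - 1)⁻¹ * Real.log
    (Matrix.trace (matRpow a
      (matRpow ((1 - a) / (2 * a)) γ * ρ * matRpow ((1 - a) / (2 * a)) γ))).re

/-!
Positivity of the weights gives `ρ i ≤ (p i)⁻¹ • γ` for the average `γ`, so it is enough to show
that `ρ ≤ c • γ` forces the sandwiched Rényi relative entropy of `ρ` and `γ` to be at most `log c`.

Operator monotonicity of `t ↦ t ^ (a - 1)` would give this only for `a ≤ 2`. Instead write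
`ρ = Rᴴ * R` and `W = γ ^ (-1/2) * Rᴴ`. Then `W * Wᴴ ≤ c`, hence `Wᴴ * W ≤ c`, and the trace inside
the logarithm is that of `(Wᴴ * γ ^ (1/a) * W) ^ a`. Jensen's inequality for the spectral measures
of `γ ^ (1/a)` at the images under `W` of the eigenvectors of `Wᴴ * γ ^ (1/a) * W` bounds it by
`c ^ (a - 1) * tr (Wᴴ * γ * W) ≤ c ^ (a - 1) * tr ρ`, for every `a > 1`.
-/

section SpectralCalculus

variable {m : Type*} [Fintype m] [DecidableEq m] {A : Matrix m m ℂ}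

lemma mfun_eq_cfc (f : ℝ → ℝ) (A : Matrix m m ℂ) : mfun f A = cfc f A := by
  unfold mfun
  split_ifs with hA
  · exact (hA.cfc_eq f).symm
  · exact (cfc_apply_of_not_predicate A hA).symm

lemma isHermitian_mfun (f : ℝ → ℝ) (A : Matrix m m ℂ) : (mfun f A).IsHermitian :=
  mfun_eq_cfc f A ▸ cfc_predicate f A

lemma mfun_mul_mfun (f g : ℝ → ℝ) (A : Matrix m m ℂ) :
    mfun f A * mfun g A = mfun (fun u => f u * g u) A := by
  simp only [mfun_eq_cfc]
  exact (cfc_mul f g A (A.finite_real_spectrum.continuousOn f)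
    (A.finite_real_spectrum.continuousOn g)).symm

lemma mfun_mfun (g f : ℝ → ℝ) (hA : A.IsHermitian) :
    mfun g (mfun f A) = mfun (fun u => g (f u)) A := by
  simp only [mfun_eq_cfc]
  exact (cfc_comp' g f A ((A.finite_real_spectrum.image f).continuousOn g)
    (A.finite_real_spectrum.continuousOn f) hA).symm

lemma mfun_congr_of_posSemidef {f g : ℝ → ℝ} (hA : A.PosSemidef)
    (h : ∀ u, 0 ≤ u → f u = g u) : mfun f A = mfun g A := by
  open scoped MatrixOrder in
  simp only [mfun_eq_cfc]
  exact cfc_congr fun u hu => h u (spectrum_nonneg_of_nonneg hA.nonneg hu)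

lemma posSemidef_mfun {f : ℝ → ℝ} (hA : A.PosSemidef) (hf : ∀ u, 0 ≤ u → 0 ≤ f u) :
    (mfun f A).PosSemidef := by
  open scoped MatrixOrder in
  rw [mfun_eq_cfc, ← nonneg_iff_posSemidef]
  exact cfc_nonneg fun u hu => hf u (spectrum_nonneg_of_nonneg hA.nonneg hu)

lemma mfun_id (hA : A.IsHermitian) : mfun (fun u => u) A = A := by
  rw [mfun_eq_cfc]
  exact cfc_id' ℝ A hA

open scoped MatrixOrder in
lemma mfun_le_one {f : ℝ → ℝ} (hA : A.PosSemidef) (hf : ∀ u, 0 ≤ u → f u ≤ 1) :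
    mfun f A ≤ 1 := by
  rw [mfun_eq_cfc]
  exact cfc_le_one f A fun u hu => hf u (spectrum_nonneg_of_nonneg hA.nonneg hu)

lemma trace_mfun (f : ℝ → ℝ) (hA : A.IsHermitian) :
    (mfun f A).trace = ∑ i, (f (hA.eigenvalues i) : ℂ) := by
  rw [mfun, dif_pos hA, IsHermitian.cfc, Unitary.conjStarAlgAut_apply, trace_mul_cycle,
    Unitary.coe_star_mul_self, one_mul, trace_diagonal]
  rfl

lemma trace_mfun_conjTranspose_mul_self (f : ℝ → ℝ) (B : Matrix m m ℂ) :
    (mfun f (Bᴴ * B)).trace = (mfun f (B * Bᴴ)).trace := by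
  have hl := isHermitian_conjTranspose_mul_self B
  have hr := isHermitian_mul_conjTranspose_self B
  rw [trace_mfun f hl, trace_mfun f hr,
    (hl.eigenvalues_eq_eigenvalues_iff hr).mpr (charpoly_mul_comm _ _)]

end SpectralCalculus

section RealPowers

variable {m : Type*} [Fintype m] [DecidableEq m] {A : Matrix m m ℂ}

lemma matRpow_inv_matRpow {a : ℝ} (ha : a ≠ 0) (hA : A.PosSemidef) :
    matRpow a (matRpow a⁻¹ A) = A := by
  rw [matRpow, matRpow, mfun_mfun _ _ hA.1,
    mfun_congr_of_posSemidef hA fun u hu => Real.rpow_inv_rpow hu ha, mfun_id hA.1]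

lemma posSemidef_matRpow (t : ℝ) (hA : A.PosSemidef) : (matRpow t A).PosSemidef :=
  posSemidef_mfun hA fun _ hu => Real.rpow_nonneg hu t

lemma isHermitian_matRpow (t : ℝ) (A : Matrix m m ℂ) : (matRpow t A).IsHermitian :=
  isHermitian_mfun _ A

lemma matRpow_mul_matRpow {s t : ℝ} (hst : s + t ≠ 0) (hA : A.PosSemidef) :
    matRpow s A * matRpow t A = matRpow (s + t) A := by
  rw [matRpow, matRpow, mfun_mul_mfun]
  exact mfun_congr_of_posSemidef hA fun u hu => (Real.rpow_add' hu hst).symm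

lemma matRpow_neg_half_conj_matRpow {t : ℝ} (ht : t ≠ 1) (hA : A.PosSemidef) :
    matRpow (-1 / 2) A * matRpow t A * matRpow (-1 / 2) A = matRpow (t - 1) A := by
  rw [matRpow, matRpow, mfun_mul_mfun, mfun_mul_mfun]
  refine mfun_congr_of_posSemidef hA fun u hu => ?_
  have hinv : u ^ (-1 / 2 : ℝ) * u ^ (-1 / 2 : ℝ) = u ^ (-1 : ℝ) := by
    rw [← Real.rpow_add' hu (by norm_num)]
    norm_num
  rw [mul_right_comm, hinv, ← Real.rpow_add' hu (by contrapose! ht; linarith), neg_add_eq_sub]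

/- For singular `A` the left-hand side is the projection onto the range of `A`, because `Real.rpow`
has `0 ^ (-1 / 2) = 0`. -/
open scoped MatrixOrder in
lemma matRpow_neg_half_conj_self_le_one (hA : A.PosSemidef) :
    matRpow (-1 / 2) A * A * matRpow (-1 / 2) A ≤ 1 := by
  nth_rewrite 2 [← mfun_id hA.1]
  rw [matRpow, mfun_mul_mfun, mfun_mul_mfun]
  refine mfun_le_one hA fun u hu => ?_
  have hinv : u ^ (-1 / 2 : ℝ) * u ^ (-1 / 2 : ℝ) = u⁻¹ := by
    rw [← Real.rpow_add' hu (by norm_num), ← Real.rpow_neg_one]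
    norm_num
  rw [mul_right_comm, hinv]
  exact inv_mul_le_one

end RealPowers

section TraceJensen

lemma rpow_sum_mul_le {ι : Type*} (s : Finset ι) {a : ℝ} (ha : 1 ≤ a) {w z : ι → ℝ}
    (hw : ∀ i, 0 ≤ w i) (hz : ∀ i, 0 ≤ z i) :
    (∑ i ∈ s, w i * z i) ^ a ≤ (∑ i ∈ s, w i) ^ (a - 1) * ∑ i ∈ s, w i * z i ^ a := by
  have ha0 : a ≠ 0 := by positivity
  have hw_sum : 0 ≤ ∑ i ∈ s, w i := Finset.sum_nonneg fun i _ => hw i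
  have hwz_sum : 0 ≤ ∑ i ∈ s, w i * z i ^ a :=
    Finset.sum_nonneg fun i _ => mul_nonneg (hw i) (Real.rpow_nonneg (hz i) a)
  calc (∑ i ∈ s, w i * z i) ^ a
      ≤ ((∑ i ∈ s, w i) ^ (1 - a⁻¹) * (∑ i ∈ s, w i * z i ^ a) ^ a⁻¹) ^ a :=
        Real.rpow_le_rpow (Finset.sum_nonneg fun i _ => mul_nonneg (hw i) (hz i))
          (Real.inner_le_weight_mul_Lp_of_nonneg s ha w z hw hz) (by positivity)
    _ = (∑ i ∈ s, w i) ^ (a - 1) * ∑ i ∈ s, w i * z i ^ a := by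
        rw [Real.mul_rpow (Real.rpow_nonneg hw_sum _) (Real.rpow_nonneg hwz_sum _),
          Real.rpow_inv_rpow hwz_sum ha0, ← Real.rpow_mul hw_sum, sub_mul, one_mul,
          inv_mul_cancel₀ ha0]

variable {m n : Type*} [Fintype m] [Fintype n]

lemma trace_eq_sum_star_dotProduct_mulVec (b : OrthonormalBasis n ℂ (EuclideanSpace ℂ m))
    (M : Matrix m m ℂ) : M.trace = ∑ i, star ⇑(b i) ⬝ᵥ M *ᵥ ⇑(b i) := by
  classical
  have h := LinearMap.trace_eq_sum_inner (toEuclideanLin M) b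
  simp only [EuclideanSpace.inner_eq_star_dotProduct, dotProduct_comm _ (star _)] at h
  rw [← M.trace_toLin_eq (PiLp.basisFun 2 ℂ m)]
  exact h

lemma star_dotProduct_conjTranspose_mul_mul_mulVec (W : Matrix m n ℂ) (M : Matrix m m ℂ)
    (v : n → ℂ) : star v ⬝ᵥ (Wᴴ * M * W) *ᵥ v = star (W *ᵥ v) ⬝ᵥ M *ᵥ (W *ᵥ v) := by
  rw [← mulVec_mulVec, ← mulVec_mulVec, star_mulVec, ← dotProduct_mulVec]

variable [DecidableEq m]

/-- The spectral measure of the Hermitian matrix `A` at the vector `v`: the `i`-th eigenvalue of `A`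
carries the squared modulus of the `i`-th coordinate of `v` in the eigenbasis of `A`. It turns
quadratic forms of functions of `A` into weighted sums. -/
noncomputable def spectralWeight {A : Matrix m m ℂ} (hA : A.IsHermitian) (v : m → ℂ) (i : m) : ℝ :=
  Complex.normSq ((star (hA.eigenvectorUnitary : Matrix m m ℂ) *ᵥ v) i)

lemma star_dotProduct_mfun_mulVec {A : Matrix m m ℂ} (hA : A.IsHermitian) (f : ℝ → ℝ)
    (v : m → ℂ) :
    (star v ⬝ᵥ mfun f A *ᵥ v).re = ∑ i, spectralWeight hA v i * f (hA.eigenvalues i) := by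
  rw [mfun, dif_pos hA, IsHermitian.cfc, Unitary.conjStarAlgAut_apply, ← mulVec_mulVec,
    ← mulVec_mulVec, dotProduct_mulVec,
    ← conjTranspose_conjTranspose (hA.eigenvectorUnitary : Matrix m m ℂ), ← star_mulVec]
  simp only [dotProduct, mulVec_diagonal, spectralWeight, Complex.re_sum]
  refine Finset.sum_congr rfl fun i _ => ?_
  simp only [← star_eq_conjTranspose, Pi.star_apply, RCLike.star_def, Complex.coe_algebraMap,
    Function.comp_apply, star_star, Complex.mul_re, Complex.conj_re, Complex.ofReal_re,
    Complex.ofReal_im, zero_mul, sub_zero, Complex.conj_im, Complex.mul_im, add_zero, neg_mul,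
    sub_neg_eq_add, Complex.normSq_apply]
  ring

lemma star_dotProduct_self_eq_sum_spectralWeight {A : Matrix m m ℂ} (hA : A.IsHermitian)
    (v : m → ℂ) : (star v ⬝ᵥ v).re = ∑ i, spectralWeight hA v i := by
  have hone : mfun (fun _ => 1) A = 1 := by
    rw [mfun_eq_cfc]
    exact cfc_const_one ℝ A hA
  simpa [hone] using star_dotProduct_mfun_mulVec hA (fun _ => 1) v

lemma rpow_star_dotProduct_mulVec_le {X : Matrix m m ℂ} (hX : X.PosSemidef) {a : ℝ} (ha : 1 ≤ a)
    (v : m → ℂ) :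
    (star v ⬝ᵥ X *ᵥ v).re ^ a
      ≤ (star v ⬝ᵥ v).re ^ (a - 1) * (star v ⬝ᵥ matRpow a X *ᵥ v).re := by
  have hid := star_dotProduct_mfun_mulVec hX.1 (fun u => u) v
  rw [mfun_id hX.1] at hid
  rw [hid, star_dotProduct_self_eq_sum_spectralWeight hX.1, matRpow,
    star_dotProduct_mfun_mulVec hX.1]
  exact rpow_sum_mul_le _ ha (fun _ => Complex.normSq_nonneg _) hX.eigenvalues_nonneg

open scoped MatrixOrder in
lemma trace_matRpow_conjTranspose_mul_mul_le [DecidableEq n] {X : Matrix m m ℂ}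
    (hX : X.PosSemidef) {a c : ℝ} (ha : 1 ≤ a) {W : Matrix m n ℂ} (hW : Wᴴ * W ≤ c • 1) :
    (matRpow a (Wᴴ * X * W)).trace.re ≤ c ^ (a - 1) * (Wᴴ * matRpow a X * W).trace.re := by
  have hB : (Wᴴ * X * W).IsHermitian := (hX.conjTranspose_mul_mul_same W).1
  set e : n → n → ℂ := fun i => ⇑(hB.eigenvectorBasis i)
  have hnorm (i : n) : (star (W *ᵥ e i) ⬝ᵥ W *ᵥ e i).re ≤ c := by
    have h := (le_iff.mp hW).re_dotProduct_nonneg (e i)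
    have hunit : star (e i) ⬝ᵥ e i = 1 := by
      rw [dotProduct_comm, ← EuclideanSpace.inner_eq_star_dotProduct]
      exact inner_self_eq_one_of_norm_eq_one (hB.eigenvectorBasis.norm_eq_one i)
    simpa [sub_mulVec, smul_mulVec, ← dotProduct_mulVec, ← mulVec_mulVec, star_mulVec, hunit]
      using h
  have heig (i : n) : hB.eigenvalues i ^ a
      ≤ c ^ (a - 1) * (star (e i) ⬝ᵥ (Wᴴ * matRpow a X * W) *ᵥ e i).re := by
    have hpos := (posSemidef_matRpow a hX).re_dotProduct_nonneg (W *ᵥ e i)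
    have hsq : 0 ≤ (star (W *ᵥ e i) ⬝ᵥ W *ᵥ e i).re :=
      (Complex.nonneg_iff.mp (dotProduct_star_self_nonneg _)).1
    rw [hB.eigenvalues_eq, star_dotProduct_conjTranspose_mul_mul_mulVec,
      star_dotProduct_conjTranspose_mul_mul_mulVec]
    refine (rpow_star_dotProduct_mulVec_le hX ha _).trans ?_
    gcongr
    exact hnorm i
  calc (matRpow a (Wᴴ * X * W)).trace.re
      = ∑ i, hB.eigenvalues i ^ a := by simp [matRpow, trace_mfun _ hB]
    _ ≤ ∑ i, c ^ (a - 1) * (star (e i) ⬝ᵥ (Wᴴ * matRpow a X * W) *ᵥ e i).re :=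
        Finset.sum_le_sum fun i _ => heig i
    _ = c ^ (a - 1) * (Wᴴ * matRpow a X * W).trace.re := by
        rw [trace_eq_sum_star_dotProduct_mulVec hB.eigenvectorBasis, Complex.re_sum,
          Finset.mul_sum]

end TraceJensen

section SandwichedRenyi

open scoped MatrixOrder

lemma star_mul_self_le_algebraMap_of_mul_star_self_le {A : Type*} [CStarAlgebra A] [PartialOrder A]
    [StarOrderedRing A] {w : A} {c : ℝ} (hc : 0 ≤ c) (h : w * star w ≤ algebraMap ℝ A c) :
    star w * w ≤ algebraMap ℝ A c := by
  rw [← CStarAlgebra.norm_le_iff_le_algebraMap _ hc (mul_star_self_nonneg w),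
    CStarRing.norm_self_mul_star, ← CStarRing.norm_star_mul_self] at h
  exact (CStarAlgebra.norm_le_iff_le_algebraMap _ hc (star_mul_self_nonneg w)).mp h

variable {m : Type*} [Fintype m]

lemma trace_le_trace {A B : Matrix m m ℂ} (h : A ≤ B) : A.trace ≤ B.trace :=
  (tracePositiveLinearMap m ℂ ℂ).monotone' h

variable [DecidableEq m]

open scoped Matrix.Norms.L2Operator in
lemma conjTranspose_mul_self_le_of_mul_conjTranspose_self_le {W : Matrix m m ℂ} {c : ℝ}
    (hc : 0 ≤ c) (h : W * Wᴴ ≤ c • 1) : Wᴴ * W ≤ c • 1 := by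
  rw [← Algebra.algebraMap_eq_smul_one] at h ⊢
  exact star_mul_self_le_algebraMap_of_mul_star_self_le hc h

lemma matRpow_neg_half_conj_le_smul_one {ρ γ : Matrix m m ℂ} {c : ℝ} (hc : 0 ≤ c)
    (hγ : γ.PosSemidef) (h : ρ ≤ c • γ) :
    matRpow (-1 / 2) γ * ρ * matRpow (-1 / 2) γ ≤ c • 1 :=
  calc matRpow (-1 / 2) γ * ρ * matRpow (-1 / 2) γ
      ≤ matRpow (-1 / 2) γ * (c • γ) * matRpow (-1 / 2) γ :=
        (isHermitian_matRpow _ γ).isSelfAdjoint.conjugate_le_conjugate h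
    _ = c • (matRpow (-1 / 2) γ * γ * matRpow (-1 / 2) γ) := by
        rw [Matrix.mul_smul, Matrix.smul_mul]
    _ ≤ c • 1 := smul_le_smul_of_nonneg_left (matRpow_neg_half_conj_self_le_one hγ) hc

lemma conjTranspose_mul_mul_matRpow_mul_conjTranspose (t : ℝ) (γ R M : Matrix m m ℂ) :
    (matRpow t γ * Rᴴ)ᴴ * M * (matRpow t γ * Rᴴ) = R * (matRpow t γ * M * matRpow t γ) * Rᴴ := by
  simp only [conjTranspose_mul, conjTranspose_conjTranspose, (isHermitian_matRpow t γ).eq,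
    Matrix.mul_assoc]

lemma trace_matRpow_sandwich {a : ℝ} (ha : 1 < a) {γ : Matrix m m ℂ} (hγ : γ.PosSemidef)
    (R : Matrix m m ℂ) :
    (matRpow a (matRpow ((1 - a) / (2 * a)) γ * (Rᴴ * R) * matRpow ((1 - a) / (2 * a)) γ)).trace
      = (matRpow a ((matRpow (-1 / 2) γ * Rᴴ)ᴴ * matRpow a⁻¹ γ
          * (matRpow (-1 / 2) γ * Rᴴ))).trace := by
  set s := (1 - a) / (2 * a) with hs
  have hinv : a⁻¹ < 1 := inv_lt_one_of_one_lt₀ ha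
  have hexp : s + s = a⁻¹ - 1 := by
    rw [hs]
    field_simp
    ring
  have hS : (matRpow s γ)ᴴ = matRpow s γ := isHermitian_matRpow s γ
  calc (matRpow a (matRpow s γ * (Rᴴ * R) * matRpow s γ)).trace
      = (matRpow a ((R * matRpow s γ)ᴴ * (R * matRpow s γ))).trace := by
        simp only [conjTranspose_mul, hS, Matrix.mul_assoc]
    _ = (matRpow a ((R * matRpow s γ) * (R * matRpow s γ)ᴴ)).trace :=
        trace_mfun_conjTranspose_mul_self _ _
    _ = (matRpow a (R * (matRpow s γ * matRpow s γ) * Rᴴ)).trace := by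
        simp only [conjTranspose_mul, hS, Matrix.mul_assoc]
    _ = _ := by
        rw [matRpow_mul_matRpow (by linarith) hγ, hexp,
          conjTranspose_mul_mul_matRpow_mul_conjTranspose,
          matRpow_neg_half_conj_matRpow hinv.ne hγ]

lemma trace_matRpow_sandwich_le {a c : ℝ} (ha : 1 < a) (hc : 0 ≤ c) {ρ γ : Matrix m m ℂ}
    (hρ : ρ.PosSemidef) (hγ : γ.PosSemidef) (h : ρ ≤ c • γ) :
    (matRpow a (matRpow ((1 - a) / (2 * a)) γ * ρ * matRpow ((1 - a) / (2 * a)) γ)).trace.re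
      ≤ c ^ (a - 1) * ρ.trace.re := by
  obtain ⟨R, rfl⟩ : ∃ R, ρ = Rᴴ * R := CStarAlgebra.nonneg_iff_eq_star_mul_self.mp hρ.nonneg
  set P := matRpow (-1 / 2) γ
  have hP : Pᴴ = P := isHermitian_matRpow _ γ
  have hW : (P * Rᴴ)ᴴ * (P * Rᴴ) ≤ c • 1 := by
    apply conjTranspose_mul_self_le_of_mul_conjTranspose_self_le hc
    simpa only [conjTranspose_mul, conjTranspose_conjTranspose, hP, Matrix.mul_assoc] using
      matRpow_neg_half_conj_le_smul_one hc hγ h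
  have hproj : R * (P * γ * P) * Rᴴ ≤ R * Rᴴ := by
    simpa only [star_eq_conjTranspose, mul_one] using
      star_right_conjugate_le_conjugate (matRpow_neg_half_conj_self_le_one hγ) R
  calc (matRpow a (matRpow ((1 - a) / (2 * a)) γ * (Rᴴ * R)
        * matRpow ((1 - a) / (2 * a)) γ)).trace.re
      = (matRpow a ((P * Rᴴ)ᴴ * matRpow a⁻¹ γ * (P * Rᴴ))).trace.re := by
        rw [trace_matRpow_sandwich ha hγ]
    _ ≤ c ^ (a - 1) * ((P * Rᴴ)ᴴ * γ * (P * Rᴴ)).trace.re := by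
        simpa only [matRpow_inv_matRpow (by positivity : a ≠ 0) hγ] using
          trace_matRpow_conjTranspose_mul_mul_le (posSemidef_matRpow a⁻¹ hγ) ha.le hW
    _ ≤ c ^ (a - 1) * (Rᴴ * R).trace.re := by
        rw [conjTranspose_mul_mul_matRpow_mul_conjTranspose, trace_mul_comm Rᴴ]
        gcongr
        exact trace_le_trace hproj

lemma sandRenyiRel_le_log {a c : ℝ} (ha : 1 < a) {ρ γ : Matrix m m ℂ} (hρ : IsDensity ρ)
    (hγ : IsDensity γ) (h : ρ ≤ c • γ) : sandRenyiRel a ρ γ ≤ Real.log c := by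
  have hc : 1 ≤ c := by
    simpa [trace_smul, hρ.2, hγ.2] using (Complex.le_def.mp (trace_le_trace h)).1
  have ha0 : 0 < a - 1 := sub_pos.mpr ha
  have hQ := trace_matRpow_sandwich_le ha (by positivity) hρ.1 hγ.1 h
  rw [hρ.2, Complex.one_re, mul_one] at hQ
  have hconj := hρ.1.mul_mul_conjTranspose_same (matRpow ((1 - a) / (2 * a)) γ)
  rw [(isHermitian_matRpow _ γ).eq] at hconj
  have hQ0 := (Complex.nonneg_iff.mp (posSemidef_matRpow a hconj).trace_nonneg).1
  rw [sandRenyiRel, inv_mul_le_iff₀ ha0, ← Real.log_rpow (by positivity)]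
  calc Real.log _
      ≤ Real.posLog _ := le_max_right _ _
    _ ≤ Real.posLog (c ^ (a - 1)) := Real.posLog_le_posLog hQ0 hQ
    _ = Real.log (c ^ (a - 1)) :=
        Real.posLog_eq_log ((Real.one_le_rpow hc ha0.le).trans (le_abs_self _))

lemma isDensity_sum_smul {ι : Type*} [Fintype ι] {p : ι → ℝ} (hp : ∀ i, 0 ≤ p i)
    (hp1 : ∑ i, p i = 1) {ρ : ι → Matrix m m ℂ} (hρ : ∀ i, IsDensity (ρ i)) :
    IsDensity (∑ i, p i • ρ i) := by
  refine ⟨posSemidef_sum _ fun i _ => (hρ i).1.smul (hp i), ?_⟩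
  simp only [trace_sum, trace_smul, (hρ _).2, ← Finset.sum_smul, hp1, one_smul]

/- When the average is singular, `matRpow` with a negative exponent is the power on its support,
since `Real.rpow` has `0 ^ s = 0` for `s ≠ 0`. This is the usual convention for the sandwiched Rényi
relative entropy, as the support of the average contains that of each `ρ i`. -/
theorem sandRenyi_avg_le_binEntropy_general {ι : Type*} [Fintype ι] {a : ℝ} (ha : 1 < a)
    {p : ι → ℝ} (hp : ∀ i, 0 < p i) (hp1 : ∑ i, p i = 1) {ρ : ι → Matrix m m ℂ}
    (hρ : ∀ i, IsDensity (ρ i)) :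
    ∑ i, p i * sandRenyiRel a (ρ i) (∑ j, p j • ρ j) ≤ ∑ i, Real.negMulLog (p i) := by
  have hγ : IsDensity (∑ j, p j • ρ j) := isDensity_sum_smul (fun i => (hp i).le) hp1 hρ
  refine Finset.sum_le_sum fun i _ => ?_
  have hle : p i • ρ i ≤ ∑ j, p j • ρ j :=
    Finset.single_le_sum (f := fun j => p j • ρ j)
      (fun j _ => ((hρ j).1.smul (hp j).le).nonneg) (Finset.mem_univ i)
  calc p i * sandRenyiRel a (ρ i) (∑ j, p j • ρ j)
      ≤ p i * Real.log (p i)⁻¹ := by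
        gcongr
        · exact (hp i).le
        · exact sandRenyiRel_le_log ha (hρ i) hγ ((le_inv_smul_iff_of_pos (hp i)).mpr hle)
    _ = Real.negMulLog (p i) := by rw [Real.log_inv, Real.negMulLog, neg_mul, mul_neg]

end SandwichedRenyi

theorem sandRenyi_avg_le_binEntropy (n : ℕ) (hn : 1 ≤ n) (x : ℝ)
    (hx : x ∈ Set.Ioo (0:ℝ) 1) (a : ℝ) (ha : 1 < a)
    (ρ₁ ρ₂ : Matrix (Fin n) (Fin n) ℂ) (h1 : IsDensity ρ₁) (h2 : IsDensity ρ₂)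
    (hAv : (x • ρ₁ + (1 - x) • ρ₂).PosDef) :
    x * sandRenyiRel a ρ₁ (x • ρ₁ + (1 - x) • ρ₂)
        + (1 - x) * sandRenyiRel a ρ₂ (x • ρ₁ + (1 - x) • ρ₂)
      ≤ binEntropy x := by
  have hent : binEntropy x = Real.negMulLog x + Real.negMulLog (1 - x) := by
    simp only [binEntropy, Real.negMulLog]
    ring
  simpa [Fin.sum_univ_two, hent] using
    sandRenyi_avg_le_binEntropy_general ha (p := ![x, 1 - x]) (ρ := ![ρ₁, ρ₂])
      (by simp [Fin.forall_fin_two, hx.1, hx.2]) (by simp) (by simp [Fin.forall_fin_two, h1, h2])
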